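/- In Cl_{2n+1}(q,c) the element z_1 = (1/c) ∑_{k=0}^n (∏_{l=1}^k (q^{2l-1}+q^{-2l+1})/(q(q+q^{-1})c²)) ∑_{J: ℓ(J)=k} q^{2L(J)-k(2n-k+1)} γ_1^{j_1}⋯γ_n^{j_n}γ_{n+1}γ_{n+2}^{j_n}⋯γ_{2n+1}^{j_1} is central (z_1 γ_i = γ_i z_1 for all i) and satisfies z_1² = 1; moreover z_1 acts by multiplication with the scalar η on the left ideal I_L^η = Cl_{2n+1}·φ^η (η = ±1). -/

import Mathlib

noncomputable section

namespace FRT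

/-- The "dual" index `i' = N+1-i` (0-indexed: `N-1-i`). -/
def dual {N : ℕ} (i : Fin N) : Fin N := ⟨N - 1 - i.val, by have := i.2; omega⟩

/-- Generators of the free algebra. -/
def gen {N : ℕ} (i : Fin N) : FreeAlgebra ℂ (Fin N) := FreeAlgebra.ι ℂ i

/-- The sum `∑_{k<i} q^{2k-2i+2} γ_k γ_{k'}` appearing in the defining relations. -/
def pairSum (N : ℕ) (q : ℂ) (i : Fin N) : FreeAlgebra ℂ (Fin N) :=
  ∑ k ∈ Finset.Iio i, (q ^ (2 * (k.val : ℤ) - 2 * (i.val : ℤ) + 2)) • (gen k * gen (dual k))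

/-- The defining relations of the FRT–Clifford algebra `Cl_N(q,c)`. -/
inductive Rel (N : ℕ) (q c : ℂ) : FreeAlgebra ℂ (Fin N) → FreeAlgebra ℂ (Fin N) → Prop
  | sq (i : Fin N) (h : 2 * i.val + 1 ≠ N) : Rel N q c (gen i * gen i) 0
  | swap (i j : Fin N) (hlt : i < j) (h : i.val + j.val + 1 ≠ N) :
      Rel N q c (gen j * gen i) ((-(q ^ 2)) • (gen i * gen j))
  | pair (i : Fin N) (h : 2 * i.val + 1 < N) :
      Rel N q c (gen (dual i) * gen i)
        (-(gen i * gen (dual i)) + (q ^ 2 - q⁻¹ ^ 2) • pairSum N q i +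
          algebraMap ℂ _ (c ^ 2 * q ^ ((N : ℤ) - 2 * (i.val : ℤ) - 1) * (q + q⁻¹)))
  | middle (i : Fin N) (h : 2 * i.val + 1 = N) :
      Rel N q c (gen i * gen i) ((q - q⁻¹) • pairSum N q i + algebraMap ℂ _ (c ^ 2))

/-- The FRT–Clifford algebra `Cl_N(q,c)`. -/
abbrev Cl (N : ℕ) (q c : ℂ) := RingQuot (Rel N q c)

/-- The generators `γ_i` of `Cl_N(q,c)`. -/
def γ (N : ℕ) (q c : ℂ) (i : Fin N) : Cl N q c :=
  RingQuot.mkAlgHom ℂ (Rel N q c) (gen i)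

/-- Ordered product `γ_1 γ_2 ⋯ γ_m` of the first `m` generators. -/
def prodFirst (N : ℕ) (q c : ℂ) (m : ℕ) : Cl N q c :=
  (((List.finRange N).take m).map (γ N q c)).prod

/-- Ordered product `γ_{m+1} γ_{m+2} ⋯ γ_N` (0-indexed: indices `m,…,N-1`). -/
def prodFrom (N : ℕ) (q c : ℂ) (m : ℕ) : Cl N q c :=
  (((List.finRange N).drop m).map (γ N q c)).prod

/-- The ordered monomial `γ_1^{i_1} ⋯ γ_N^{i_N}` for `i ∈ {0,1}^N`. -/
def monoB (N : ℕ) (q c : ℂ) (f : Fin N → Bool) : Cl N q c :=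
  ((List.finRange N).map (fun i => if f i then γ N q c i else 1)).prod

/-- The ordered monomial `γ_1^{i_1} ⋯ γ_n^{i_n}` for `i ∈ {0,1}^n`, `n ≤ N`. -/
def monoLow (N : ℕ) (q c : ℂ) {n : ℕ} (h : n ≤ N) (f : Fin n → Bool) : Cl N q c :=
  ((List.finRange n).map (fun j => if f j then γ N q c (Fin.castLE h j) else 1)).prod

/-- `z` is homogeneous of `∂_i`-degree `0`: it is fixed by every algebra endomorphism
rescaling `γ_i` by `t` and `γ_{i'}` by `t⁻¹`. -/
def DegZeroAt (N : ℕ) (q c : ℂ) (i : ℕ) (z : Cl N q c) : Prop :=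
  ∀ t : ℂ, t ≠ 0 → ∀ f : Cl N q c →ₐ[ℂ] Cl N q c,
    (∀ j : Fin N, f (γ N q c j) =
      (if j.val = i then t else if j.val + i + 1 = N then t⁻¹ else 1) • γ N q c j) →
    f z = z

/-- For `m : Fin (2n+1)` with `m ≠ n` (the middle), the index `k ∈ Fin n` with
`m ∈ {k, k'}` (clamped arbitrarily at the middle, where it is unused). -/
def lowOdd (n : ℕ) (hn : 1 ≤ n) (m : Fin (2 * n + 1)) : Fin n :=
  ⟨min (min m.val (2 * n - m.val)) (n - 1), by omega⟩

/-- `ℓ(J) = ∑ j_k`. -/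
def ellJ (n : ℕ) (J : Fin n → Bool) : ℕ :=
  (Finset.univ.filter (fun l => J l = true)).card

/-- `L(J) = ∑ k·j_k` (1-indexed `k`). -/
def LJ (n : ℕ) (J : Fin n → Bool) : ℕ :=
  ∑ l : Fin n, if J l then l.val + 1 else 0

/-- The monomial `γ_1^{j_1}⋯γ_n^{j_n}γ_{n+1}γ_{n+2}^{j_n}⋯γ_{2n+1}^{j_1}`. -/
def monoMid (n : ℕ) (hn : 1 ≤ n) (q c : ℂ) (J : Fin n → Bool) : Cl (2 * n + 1) q c :=
  ((List.finRange (2 * n + 1)).map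
    (fun m => if m.val = n then γ (2 * n + 1) q c m
      else if J (lowOdd n hn m) then γ (2 * n + 1) q c m else 1)).prod

/-- The element `z_1` of `Cl_{2n+1}(q,c)`. -/
def zOne (n : ℕ) (hn : 1 ≤ n) (q c : ℂ) : Cl (2 * n + 1) q c :=
  c⁻¹ • ∑ J : Fin n → Bool,
    ((∏ l ∈ Finset.range (ellJ n J),
        ((q ^ (2 * (l : ℤ) + 1) + q ^ (-(2 * (l : ℤ) + 1))) / (q * (q + q⁻¹) * c ^ 2))) *
      q ^ (2 * (LJ n J : ℤ) - (ellJ n J : ℤ) * (2 * (n : ℤ) - (ellJ n J : ℤ) + 1))) •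
    monoMid n hn q c J

/-!
The square `γ_{n+1}²` is the last of the partial Casimir elements
`C_k = c² + (q - q⁻¹) ∑_{i<k} q^{2i-2n+2} γ_i γ_{i'}` (indices from `0`), and the relations say that
`γ_{k'} γ_k + γ_k γ_{k'}` is a scalar multiple of `C_k`. Hence `C_k⁻¹ γ_k γ_{k'}` is proportional to
an idempotent `p_k`, and `C_{k+1}` is `C_k` multiplied by `q⁴` on the image of `p_k`. Multiplying by
`-q⁻²` on the image of each `p_k` therefore yields inverse square roots `R_k` of the `C_k`. With the
sign `-`, the root `R_n` `q`-commutes with every `γ_i`, `i ≠ n + 1`, by the inverse of the factor by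
which `γ_{n+1}` does, so that `γ_{n+1} R_n` is central, and its square is `C_n R_n² = 1`. Expanding
all powers `R_k^j` into ordered monomials by induction on `k` identifies it with `z_1`. The product
`γ_{n+2} ⋯ γ_{2n+1}` is killed by every `p_k`, so `R_n` acts on it by `c⁻¹`.
-/

section QCommute

variable {R A : Type*} [CommSemiring R] [Semiring A] [Algebra R A]

/-- `a` and `b` commute up to the scalar `s`. Distinct generators of `Cl_N(q,c)` that are not
dual to each other satisfy this with `s = -q²`, the later one on the left. -/
def QCommute (s : R) (a b : A) : Prop := a * b = s • (b * a)

namespace QCommute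

variable {s t : R} {a b d : A}

theorem commute (h : QCommute s a b) (hs : s = 1) : Commute a b := by
  rwa [QCommute, hs, one_smul] at h

theorem mul_right (h : QCommute s a b) (h' : QCommute t a d) : QCommute (s * t) a (b * d) := by
  unfold QCommute at *
  rw [← mul_assoc, h, smul_mul_assoc, mul_assoc, h', mul_smul_comm, smul_smul, mul_assoc]

theorem mul_right_of_commute (h : QCommute s a b) (h' : Commute a d) : QCommute s a (b * d) := by
  unfold QCommute at *
  rw [← mul_assoc, h, smul_mul_assoc, mul_assoc, h'.eq, mul_assoc]

theorem commute_mul_right (h : Commute a b) (h' : QCommute s a d) : QCommute s a (b * d) := by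
  unfold QCommute at *
  rw [← mul_assoc, h.eq, mul_assoc, h', mul_smul_comm, mul_assoc]

theorem mul_left (h : QCommute s a d) (h' : QCommute t b d) : QCommute (s * t) (a * b) d := by
  unfold QCommute at *
  rw [mul_assoc, h', mul_smul_comm, ← mul_assoc, h, smul_mul_assoc, smul_smul, mul_assoc,
    mul_comm t]

theorem smul_right (r : R) (h : QCommute s a b) : QCommute s a (r • b) := by
  unfold QCommute at *
  rw [mul_smul_comm, h, smul_mul_assoc, smul_comm]

theorem symm {K : Type*} [Semifield K] [Algebra K A] {s : K} (hs : s ≠ 0)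
    (h : QCommute s a b) : QCommute s⁻¹ b a := by
  rw [QCommute, h, smul_smul, inv_mul_cancel₀ hs, one_smul]

end QCommute

end QCommute

section Dilation

variable {R A : Type*} [CommRing R] [Ring A] [Algebra R A] {p a : A}

/-- For an idempotent `p`, the element acting by `t` on the image of `p` and by `1` on the image
of `1 - p`. -/
def dilation (p : A) (t : R) : A := 1 + (t - 1) • p

theorem dilation_one (p : A) : dilation p (1 : R) = 1 := by
  rw [dilation, sub_self, zero_smul, add_zero]

theorem dilation_mul_dilation (hp : IsIdempotentElem p) (t u : R) :
    dilation p t * dilation p u = dilation p (t * u) := by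
  simp only [dilation, add_mul, mul_add, one_mul, mul_one, smul_mul_assoc, mul_smul_comm, hp.eq]
  module

theorem dilation_pow (hp : IsIdempotentElem p) (t : R) (j : ℕ) :
    dilation p t ^ j = dilation p (t ^ j) := by
  induction j with
  | zero => rw [pow_zero, pow_zero, dilation_one]
  | succ j ih => rw [pow_succ, ih, dilation_mul_dilation hp, pow_succ]

theorem commute_dilation (t : R) (h : Commute a p) : Commute a (dilation p t) :=
  (Commute.one_right a).add_right (h.smul_right _)

theorem dilation_mul_eq_smul (t : R) (h : p * a = a) : dilation p t * a = t • a := by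
  rw [dilation, add_mul, one_mul, smul_mul_assoc, h]
  module

theorem dilation_mul_eq_self (t : R) (h : p * a = 0) : dilation p t * a = a := by
  rw [dilation, add_mul, one_mul, smul_mul_assoc, h, smul_zero, add_zero]

theorem mul_dilation_eq_smul (t : R) (h : a * p = a) : a * dilation p t = t • a := by
  rw [dilation, mul_add, mul_one, mul_smul_comm, h]
  module

theorem mul_dilation_eq_self (t : R) (h : a * p = 0) : a * dilation p t = a := by
  rw [dilation, mul_add, mul_one, mul_smul_comm, h, smul_zero, add_zero]

end Dilation

section Anticommutator

variable {R A : Type*} [CommSemiring R] [Semiring A] [Algebra R A] {μ : R} {a b C E : A}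

theorem smul_mul_mul_mul_eq_left (ha : a * a = 0) (hC : μ • (b * a + a * b) = C)
    (hE : Commute E a) (hCE : C * E = 1) : μ • (a * b * E) * a = a := by
  calc μ • (a * b * E) * a
      = a * (μ • (b * a + a * b)) * E := by
        rw [smul_mul_assoc, mul_assoc, hE.eq, mul_smul_comm, mul_add, ← mul_assoc a a, ha,
          zero_mul, add_zero, smul_mul_assoc]
        simp only [mul_assoc]
    _ = a := by rw [hC, mul_assoc, hCE, mul_one]

theorem isIdempotentElem_smul_mul_mul (h : μ • (a * b * E) * a = a) :
    IsIdempotentElem (μ • (a * b * E)) := by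
  rw [IsIdempotentElem, mul_smul_comm, ← mul_assoc, ← mul_assoc, h]

theorem mul_smul_mul_mul_eq_right (hb : b * b = 0) (hC : μ • (b * a + a * b) = C)
    (hCb : Commute C b) (hCE : C * E = 1) : b * μ • (a * b * E) = b := by
  calc b * μ • (a * b * E)
      = μ • (b * a + a * b) * b * E := by
        rw [mul_smul_comm, smul_mul_assoc, add_mul, mul_assoc a b b, hb, mul_zero, add_zero,
          smul_mul_assoc]
        simp only [mul_assoc]
    _ = b := by rw [hC, hCb.eq, mul_assoc, hCE, mul_one]

end Anticommutator

/-- A common abstraction of the relations of `Cl_{2n+1}(q,c)`, with `x_k = γ_k`, `y_k = γ_{k'}`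
and `w = γ_{n+1}`. The partial Casimir elements `casimir k` are part of the data, and the scalars
are `s = -q²` and `μ_k = (q^{2n-2k}(q + q⁻¹))⁻¹`. Only the values of `x`, `y` and `μ` at `k < n`
matter. -/
structure CliffordSystem {K : Type*} [Field K] (s c : K) (μ : ℕ → K) (n : ℕ) (A : Type*) [Ring A]
    [Algebra K A] where
  x : ℕ → A
  y : ℕ → A
  w : A
  casimir : ℕ → A
  s_ne_zero : s ≠ 0
  c_ne_zero : c ≠ 0
  x_sq : ∀ k < n, x k * x k = 0
  y_sq : ∀ k < n, y k * y k = 0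
  x_x : ∀ {j k}, j < k → k < n → QCommute s (x k) (x j)
  y_y : ∀ {j k}, j < k → k < n → QCommute s (y j) (y k)
  y_x : ∀ {j k}, j < n → k < n → j ≠ k → QCommute s (y j) (x k)
  w_x : ∀ {k}, k < n → QCommute s w (x k)
  y_w : ∀ {k}, k < n → QCommute s (y k) w
  casimir_zero : casimir 0 = algebraMap K A (c ^ 2)
  casimir_succ : ∀ k < n, casimir (k + 1) = casimir k + (s ^ 2 - 1) • (μ k • (x k * y k))
  anticomm : ∀ k < n, μ k • (y k * x k + x k * y k) = casimir k
  w_sq : w * w = casimir n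

namespace CliffordSystem

variable {K A : Type*} [Field K] [Ring A] [Algebra K A] {s c : K} {μ : ℕ → K} {n : ℕ}
  (S : CliffordSystem s c μ n A) {j k m : ℕ} {a : A}

/-- The inverse square roots `R_k` of the partial Casimir elements. The factor `s⁻¹`, rather than
`-s⁻¹`, on the image of the `k`-th idempotent is what makes `w * R_n` central. -/
def invSqrt : ℕ → A
  | 0 => algebraMap K A c⁻¹
  | k + 1 => invSqrt k * dilation (μ k • (S.x k * S.y k * invSqrt k ^ 2)) s⁻¹

/-- The idempotent `p_k = μ_k x_k y_k C_k⁻¹`, with `C_k⁻¹` written as `R_k²`. -/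
def idem (k : ℕ) : A := μ k • (S.x k * S.y k * S.invSqrt k ^ 2)

/-- The central involution `w * R_n`, which is `z_1` in the case of `Cl_{2n+1}(q,c)`. -/
def chirality : A := S.w * S.invSqrt n

theorem invSqrt_succ (k : ℕ) : S.invSqrt (k + 1) = S.invSqrt k * dilation (S.idem k) s⁻¹ := rfl

theorem commute_casimir (hm : m ≤ n) (h : ∀ i < m, Commute a (S.x i * S.y i)) :
    Commute a (S.casimir m) := by
  induction m with
  | zero => exact S.casimir_zero ▸ Algebra.commute_algebraMap_right _ _
  | succ m ih =>
    rw [S.casimir_succ m hm]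
    exact (ih (by omega) fun i hi => h i (by omega)).add_right
      (((h m (by omega)).smul_right _).smul_right _)

theorem commute_invSqrt (h : ∀ i < m, Commute a (S.x i * S.y i)) :
    Commute a (S.invSqrt m) := by
  induction m with
  | zero => exact Algebra.commute_algebraMap_right _ _
  | succ m ih =>
    have hR := ih fun i hi => h i (by omega)
    exact hR.mul_right
      (commute_dilation _ (((h m (by omega)).mul_right (hR.pow_right 2)).smul_right _))

theorem commute_idem (h : ∀ i ≤ m, Commute a (S.x i * S.y i)) : Commute a (S.idem m) :=
  ((h m le_rfl).mul_right
    ((S.commute_invSqrt fun i hi => h i hi.le).pow_right 2)).smul_right _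

theorem commute_x_pair (hkj : k < j) (hj : j < n) : Commute (S.x j) (S.x k * S.y k) :=
  ((S.x_x hkj hj).mul_right ((S.y_x (hkj.trans hj) hj hkj.ne).symm S.s_ne_zero)).commute
    (mul_inv_cancel₀ S.s_ne_zero)

theorem commute_y_pair (hkj : k < j) (hj : j < n) : Commute (S.y j) (S.x k * S.y k) :=
  ((S.y_x hj (hkj.trans hj) hkj.ne').mul_right ((S.y_y hkj hj).symm S.s_ne_zero)).commute
    (mul_inv_cancel₀ S.s_ne_zero)

theorem commute_w_pair (hk : k < n) : Commute S.w (S.x k * S.y k) :=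
  ((S.w_x hk).mul_right ((S.y_w hk).symm S.s_ne_zero)).commute (mul_inv_cancel₀ S.s_ne_zero)

theorem commute_pair_pair (hj : j < n) (hk : k < n) :
    Commute (S.x j * S.y j) (S.x k * S.y k) := by
  rcases lt_trichotomy k j with h | rfl | h
  · exact (S.commute_x_pair h hj).mul_left (S.commute_y_pair h hj)
  · exact Commute.refl _
  · exact ((S.commute_x_pair h hk).mul_left (S.commute_y_pair h hk)).symm

theorem commute_x_invSqrt (hkj : k ≤ j) (hj : j < n) : Commute (S.x j) (S.invSqrt k) :=
  S.commute_invSqrt fun _ hi => S.commute_x_pair (hi.trans_le hkj) hj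

theorem commute_y_invSqrt (hkj : k ≤ j) (hj : j < n) : Commute (S.y j) (S.invSqrt k) :=
  S.commute_invSqrt fun _ hi => S.commute_y_pair (hi.trans_le hkj) hj

theorem commute_w_invSqrt : Commute S.w (S.invSqrt n) := S.commute_invSqrt fun _ => S.commute_w_pair

theorem commute_pair_invSqrt (hk : k < n) : Commute (S.x k * S.y k) (S.invSqrt k) :=
  (S.commute_x_invSqrt le_rfl hk).mul_left (S.commute_y_invSqrt le_rfl hk)

theorem commute_idem_invSqrt (hk : k < n) : Commute (S.idem k) (S.invSqrt k) :=
  ((S.commute_pair_invSqrt hk).mul_left ((Commute.refl _).pow_left 2)).smul_left _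

theorem casimir_mul_idem_of_mul_eq_one (hk : k < n) (h : S.casimir k * S.invSqrt k ^ 2 = 1) :
    S.casimir k * S.idem k = μ k • (S.x k * S.y k) := by
  have hC : Commute (S.x k * S.y k) (S.casimir k) :=
    S.commute_casimir hk.le fun _ hi => S.commute_pair_pair hk (hi.trans hk)
  rw [idem, mul_smul_comm, ← mul_assoc, ← hC.eq, mul_assoc, h, mul_one]

theorem casimir_mul_invSqrt_sq (hk : k ≤ n) : S.casimir k * S.invSqrt k ^ 2 = 1 := by
  induction k with
  | zero =>
    rw [S.casimir_zero, invSqrt, ← map_pow, ← map_mul, ← mul_pow, mul_inv_cancel₀ S.c_ne_zero,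
      one_pow, map_one]
  | succ k ih =>
    have hR := ih (by omega)
    have hp : IsIdempotentElem (S.idem k) := isIdempotentElem_smul_mul_mul <|
      smul_mul_mul_mul_eq_left (S.x_sq k hk) (S.anticomm k hk)
        ((S.commute_x_invSqrt le_rfl hk).symm.pow_left 2) hR
    have hC : S.casimir (k + 1) = S.casimir k * dilation (S.idem k) (s ^ 2) := by
      rw [S.casimir_succ k hk, ← S.casimir_mul_idem_of_mul_eq_one hk hR, dilation, mul_add, mul_one,
        mul_smul_comm]
    have hpR := commute_dilation (s ^ 2) ((S.commute_idem_invSqrt hk).symm.pow_left 2)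
    calc S.casimir (k + 1) * S.invSqrt (k + 1) ^ 2
        = S.casimir k * (dilation (S.idem k) (s ^ 2) * S.invSqrt k ^ 2) *
            dilation (S.idem k) (s⁻¹ ^ 2) := by
          rw [hC, invSqrt_succ, (commute_dilation _ (S.commute_idem_invSqrt hk).symm).mul_pow,
            dilation_pow hp]
          simp only [mul_assoc]
      _ = S.casimir k * S.invSqrt k ^ 2 *
            (dilation (S.idem k) (s ^ 2) * dilation (S.idem k) (s⁻¹ ^ 2)) := by
          rw [← hpR.eq]
          simp only [mul_assoc]
      _ = 1 := by
          rw [hR, dilation_mul_dilation hp, ← mul_pow, mul_inv_cancel₀ S.s_ne_zero, one_pow,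
            dilation_one, one_mul]

theorem idem_mul_x (hk : k < n) : S.idem k * S.x k = S.x k :=
  smul_mul_mul_mul_eq_left (S.x_sq k hk) (S.anticomm k hk)
    ((S.commute_x_invSqrt le_rfl hk).symm.pow_left 2) (S.casimir_mul_invSqrt_sq hk.le)

theorem isIdempotentElem_idem (hk : k < n) : IsIdempotentElem (S.idem k) :=
  isIdempotentElem_smul_mul_mul (S.idem_mul_x hk)

theorem x_mul_idem (hk : k < n) : S.x k * S.idem k = 0 := by
  rw [idem, mul_smul_comm, ← mul_assoc, ← mul_assoc, S.x_sq k hk, zero_mul, zero_mul, smul_zero]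

theorem idem_mul_y (hk : k < n) : S.idem k * S.y k = 0 := by
  rw [idem, smul_mul_assoc, mul_assoc, ← ((S.commute_y_invSqrt le_rfl hk).pow_right 2).eq,
    ← mul_assoc, mul_assoc (S.x k), S.y_sq k hk, mul_zero, zero_mul, smul_zero]

theorem y_mul_idem (hk : k < n) : S.y k * S.idem k = S.y k :=
  mul_smul_mul_mul_eq_right (S.y_sq k hk) (S.anticomm k hk)
    (S.commute_casimir hk.le fun _ hi => S.commute_y_pair hi hk).symm
    (S.casimir_mul_invSqrt_sq hk.le)

theorem commute_x_idem_of_qCommute (hjk : j < k) (hk : k < n)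
    (h : QCommute s (S.x j) (S.invSqrt k)) : Commute (S.x j) (S.idem k) := by
  have hs := S.s_ne_zero
  have hxy := ((S.x_x hjk hk).symm hs).mul_right ((S.y_x hk (hjk.trans hk) hjk.ne').symm hs)
  have hp := (hxy.mul_right (h.mul_right h)).smul_right (μ k)
  rw [idem, sq]
  exact hp.commute (by field_simp)

theorem commute_y_idem_of_qCommute (hjk : j < k) (hk : k < n)
    (h : QCommute s⁻¹ (S.y j) (S.invSqrt k)) : Commute (S.y j) (S.idem k) := by
  have hs := S.s_ne_zero
  have hxy := (S.y_x (hjk.trans hk) hk hjk.ne).mul_right (S.y_y hjk hk)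
  have hp := (hxy.mul_right (h.mul_right h)).smul_right (μ k)
  rw [idem, sq]
  exact hp.commute (by field_simp)

theorem qCommute_x_invSqrt (hjk : j < k) (hk : k ≤ n) : QCommute s (S.x j) (S.invSqrt k) := by
  induction k, hjk using Nat.le_induction with
  | base =>
    have hD : QCommute s (S.x j) (dilation (S.idem j) s⁻¹) := by
      rw [QCommute, mul_dilation_eq_self _ (S.x_mul_idem hk),
        dilation_mul_eq_smul _ (S.idem_mul_x hk), smul_smul, mul_inv_cancel₀ S.s_ne_zero, one_smul]
    exact .commute_mul_right (S.commute_x_invSqrt le_rfl hk) hD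
  | succ k hjk ih =>
    have hR := ih (by omega)
    exact hR.mul_right_of_commute
      (commute_dilation s⁻¹ (S.commute_x_idem_of_qCommute hjk hk hR))

theorem qCommute_y_invSqrt (hjk : j < k) (hk : k ≤ n) : QCommute s⁻¹ (S.y j) (S.invSqrt k) := by
  induction k, hjk using Nat.le_induction with
  | base =>
    have hD : QCommute s⁻¹ (S.y j) (dilation (S.idem j) s⁻¹) := by
      rw [QCommute, mul_dilation_eq_smul _ (S.y_mul_idem hk),
        dilation_mul_eq_self _ (S.idem_mul_y hk)]
    exact .commute_mul_right (S.commute_y_invSqrt le_rfl hk) hD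
  | succ k hjk ih =>
    have hR := ih (by omega)
    exact hR.mul_right_of_commute
      (commute_dilation s⁻¹ (S.commute_y_idem_of_qCommute hjk hk hR))

theorem commute_y_idem (hj : j < n) (hk : k < n) (hjk : j ≠ k) :
    Commute (S.y j) (S.idem k) := by
  rcases hjk.lt_or_gt with h | h
  · exact S.commute_y_idem_of_qCommute h hk (S.qCommute_y_invSqrt h hk.le)
  · exact S.commute_idem fun _ hi => S.commute_y_pair (hi.trans_lt h) hj

theorem commute_x_chirality (hk : k < n) : Commute (S.x k) S.chirality :=
  (((S.w_x hk).symm S.s_ne_zero).mul_right (S.qCommute_x_invSqrt hk le_rfl)).commute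
    (inv_mul_cancel₀ S.s_ne_zero)

theorem commute_y_chirality (hk : k < n) : Commute (S.y k) S.chirality :=
  ((S.y_w hk).mul_right (S.qCommute_y_invSqrt hk le_rfl)).commute (mul_inv_cancel₀ S.s_ne_zero)

theorem commute_w_chirality : Commute S.w S.chirality :=
  (Commute.refl S.w).mul_right S.commute_w_invSqrt

theorem chirality_mul_self : S.chirality * S.chirality = 1 := by
  rw [chirality, S.commute_w_invSqrt.symm.mul_mul_mul_comm, S.w_sq, ← sq,
    S.casimir_mul_invSqrt_sq le_rfl]

theorem invSqrt_mul_of_idem_mul_eq_zero (ha : ∀ k < m, S.idem k * a = 0) :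
    S.invSqrt m * a = c⁻¹ • a := by
  induction m with
  | zero => rw [invSqrt, ← Algebra.smul_def]
  | succ m ih =>
    rw [invSqrt_succ, mul_assoc, dilation_mul_eq_self _ (ha m (by omega)),
      ih fun k hk => ha k (by omega)]

theorem chirality_mul_of_idem_mul_eq_zero (ha : ∀ k < n, S.idem k * a = 0) {η : K}
    (hη : η * η = 1) :
    S.chirality * ((algebraMap K A (η * c) + S.w) * a) =
      η • ((algebraMap K A (η * c) + S.w) * a) := by
  have hw : S.w * a = c • (S.chirality * a) := by
    rw [chirality, mul_assoc, S.invSqrt_mul_of_idem_mul_eq_zero ha, mul_smul_comm, smul_smul,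
      mul_inv_cancel₀ S.c_ne_zero, one_smul]
  calc S.chirality * ((algebraMap K A (η * c) + S.w) * a)
      = S.chirality * ((η * c) • a + c • (S.chirality * a)) := by
        rw [add_mul, hw, ← Algebra.smul_def]
    _ = (η * c) • (S.chirality * a) + c • a := by
        rw [mul_add, mul_smul_comm, mul_smul_comm, ← mul_assoc, S.chirality_mul_self, one_mul]
    _ = η • ((η * c) • a + c • (S.chirality * a)) := by
        rw [smul_add, smul_smul, smul_smul, ← mul_assoc, hη, one_mul, add_comm]
    _ = η • ((algebraMap K A (η * c) + S.w) * a) := by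
        rw [add_mul, hw, ← Algebra.smul_def]

theorem invSqrt_succ_pow (hm : m < n) (j : ℕ) :
    S.invSqrt (m + 1) ^ j = S.invSqrt m ^ j +
      ((s⁻¹ ^ j - 1) * μ m) • (S.invSqrt m ^ (j + 2) * (S.x m * S.y m)) := by
  rw [invSqrt_succ, (commute_dilation _ (S.commute_idem_invSqrt hm).symm).mul_pow,
    dilation_pow (S.isIdempotentElem_idem hm), dilation, mul_add, mul_one, mul_smul_comm, idem,
    mul_smul_comm, smul_smul, ((S.commute_pair_invSqrt hm).pow_right 2).eq, ← mul_assoc, ← pow_add]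

end CliffordSystem

section OrderedMonomials

variable {M : Type*} [Monoid M]

/-- The ordered product `x_0^{j_0} ⋯ x_{m-1}^{j_{m-1}}`. -/
def incProd (x : ℕ → M) (m : ℕ) (J : Fin m → Bool) : M :=
  (List.ofFn fun k : Fin m => if J k then x k else 1).prod

/-- The reversed product `y_{m-1}^{j_{m-1}} ⋯ y_0^{j_0}`. -/
def decProd (y : ℕ → M) (m : ℕ) (J : Fin m → Bool) : M :=
  (List.ofFn fun k : Fin m => if J k then y k else 1).reverse.prod

theorem incProd_snoc (x : ℕ → M) (m : ℕ) (J : Fin m → Bool) (b : Bool) :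
    incProd x (m + 1) (Fin.snoc (α := fun _ => Bool) J b) =
      incProd x m J * (if b then x m else 1) := by
  rw [incProd, List.ofFn_succ']
  simp [incProd]

theorem decProd_snoc (y : ℕ → M) (m : ℕ) (J : Fin m → Bool) (b : Bool) :
    decProd y (m + 1) (Fin.snoc (α := fun _ => Bool) J b) =
      (if b then y m else 1) * decProd y m J := by
  rw [decProd, List.ofFn_succ']
  simp [decProd]

theorem sum_snoc {N : Type*} [AddCommMonoid N] (m : ℕ) (F : (Fin (m + 1) → Bool) → N) :
    ∑ J, F J = ∑ J : Fin m → Bool, F (Fin.snoc (α := fun _ => Bool) J false) +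
      ∑ J : Fin m → Bool, F (Fin.snoc (α := fun _ => Bool) J true) := by
  rw [← (Fin.snocEquiv fun _ => Bool).sum_comp, Fintype.sum_prod_type, Fintype.sum_bool, add_comm]
  rfl

theorem ellJ_snoc (m : ℕ) (J : Fin m → Bool) (b : Bool) :
    ellJ (m + 1) (Fin.snoc (α := fun _ => Bool) J b) = ellJ m J + if b then 1 else 0 := by
  rw [ellJ, ellJ, Finset.card_filter, Finset.card_filter, Fin.sum_univ_castSucc]
  simp only [Fin.snoc_castSucc, Fin.snoc_last]

end OrderedMonomials

section Expansion

variable {K : Type*} [Field K] (s c : K) (μ : ℕ → K)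

/-- The coefficient of the ordered monomial with exponents `J` in the `j`-th power of the inverse
square root `R_m`. -/
def invSqrtCoeff (m j : ℕ) (J : Fin m → Bool) : K :=
  c⁻¹ ^ (j + 2 * ellJ m J) * (∏ t ∈ Finset.range (ellJ m J), (s⁻¹ ^ j - s ^ (2 * t))) *
    ∏ k : Fin m, if J k then μ k else 1

theorem invSqrtCoeff_snoc_false (m j : ℕ) (J : Fin m → Bool) :
    invSqrtCoeff s c μ (m + 1) j (Fin.snoc (α := fun _ => Bool) J false) =
      invSqrtCoeff s c μ m j J := by
  simp [invSqrtCoeff, ellJ_snoc, Fin.prod_univ_castSucc]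

variable {s} in
theorem invSqrtCoeff_snoc_true (hs : s ≠ 0) (m j : ℕ) (J : Fin m → Bool) :
    invSqrtCoeff s c μ (m + 1) j (Fin.snoc (α := fun _ => Bool) J true) =
      (s⁻¹ ^ j - 1) * μ m * s ^ (2 * ellJ m J) * invSqrtCoeff s c μ m (j + 2) J := by
  have hprod : ∏ t ∈ Finset.range (ellJ m J), (s⁻¹ ^ j - s ^ (2 * (t + 1))) =
      s ^ (2 * ellJ m J) * ∏ t ∈ Finset.range (ellJ m J), (s⁻¹ ^ (j + 2) - s ^ (2 * t)) := by
    rw [pow_mul, ← Finset.card_range (ellJ m J), ← Finset.prod_const, Finset.card_range,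
      ← Finset.prod_mul_distrib]
    refine Finset.prod_congr rfl fun t _ => ?_
    rw [mul_sub, pow_add s⁻¹, mul_left_comm, ← mul_pow, mul_inv_cancel₀ hs, one_pow, mul_one]
    ring
  simp only [invSqrtCoeff, ellJ_snoc, Fin.prod_univ_castSucc, Fin.snoc_castSucc, Fin.snoc_last,
    if_true, Finset.prod_range_succ', hprod, Fin.val_castSucc, Fin.val_last, mul_zero, pow_zero]
  rw [show j + 2 * (ellJ m J + 1) = j + 2 + 2 * ellJ m J by ring]
  ring

end Expansion

namespace CliffordSystem

variable {K A : Type*} [Field K] [Ring A] [Algebra K A] {s c : K} {μ : ℕ → K} {n : ℕ}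
  (S : CliffordSystem s c μ n A) {k m : ℕ}

theorem qCommute_decProd_pair (hmk : m ≤ k) (hk : k < n) (J : Fin m → Bool) :
    QCommute (s ^ (2 * ellJ m J)) (decProd S.y m J) (S.x k * S.y k) := by
  induction m with
  | zero => simp [decProd, ellJ, QCommute]
  | succ m ih =>
    induction J using Fin.snocCases with
    | _ J b =>
      rw [decProd_snoc, ellJ_snoc]
      have h := ih (by omega) J
      cases b with
      | false => simpa using h
      | true =>
        have hy := (S.y_x (j := m) (by omega) hk (by omega)).mul_right
          (S.y_y (j := m) (by omega) hk)
        have hpow : s ^ (2 * (ellJ m J + 1)) = s * s * s ^ (2 * ellJ m J) := by ring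
        rw [if_pos rfl, if_pos rfl, hpow]
        exact hy.mul_left h

theorem qCommute_w_incProd (hm : m ≤ n) (J : Fin m → Bool) :
    QCommute (s ^ ellJ m J) S.w (incProd S.x m J) := by
  induction m with
  | zero => simp [incProd, ellJ, QCommute]
  | succ m ih =>
    induction J using Fin.snocCases with
    | _ J b =>
      rw [incProd_snoc, ellJ_snoc]
      have h := ih (by omega) J
      cases b with
      | false => simpa using h
      | true => simpa [pow_succ] using h.mul_right (S.w_x hm)

theorem idem_mul_decProd (hkm : k < m) (hm : m ≤ n) {J : Fin m → Bool} (hJ : J ⟨k, hkm⟩) :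
    S.idem k * decProd S.y m J = 0 := by
  induction m with
  | zero => omega
  | succ m ih =>
    induction J using Fin.snocCases with
    | _ J b =>
      rw [decProd_snoc, ← mul_assoc]
      rcases Nat.lt_succ_iff_lt_or_eq.1 hkm with h | rfl
      · have hcomm : Commute (S.idem k) (if b then S.y m else 1) := by
          split_ifs
          · exact (S.commute_y_idem hm (h.trans hm) h.ne').symm
          · exact Commute.one_right _
        have hJk : J ⟨k, h⟩ := by simpa [Fin.snoc, h] using hJ
        rw [hcomm.eq, mul_assoc, ih h (by omega) hJk, mul_zero]
      · have hb : b := by simpa [Fin.snoc] using hJ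
        rw [if_pos hb, S.idem_mul_y hm, zero_mul]

theorem invSqrtCoeff_smul_snoc_true (hm : m < n) (j : ℕ) (J : Fin m → Bool) :
    invSqrtCoeff s c μ (m + 1) j (Fin.snoc (α := fun _ => Bool) J true) •
        (incProd S.x m J * S.x m * (S.y m * decProd S.y m J)) =
      ((s⁻¹ ^ j - 1) * μ m) • (invSqrtCoeff s c μ m (j + 2) J •
        (incProd S.x m J * decProd S.y m J) * (S.x m * S.y m)) := by
  have h : decProd S.y m J * (S.x m * S.y m) =
    s ^ (2 * ellJ m J) • (S.x m * S.y m * decProd S.y m J) := S.qCommute_decProd_pair le_rfl hm J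
  rw [invSqrtCoeff_snoc_true c μ S.s_ne_zero, smul_mul_assoc,
    mul_assoc (incProd S.x m J) (decProd ..), h, mul_smul_comm, smul_smul, smul_smul,
    mul_assoc (incProd S.x m J), ← mul_assoc (S.x m)]
  congr 1
  ring

theorem invSqrt_pow_eq_sum (hm : m ≤ n) (j : ℕ) :
    S.invSqrt m ^ j =
      ∑ J, invSqrtCoeff s c μ m j J • (incProd S.x m J * decProd S.y m J) := by
  induction m generalizing j with
  | zero =>
    simp [invSqrtCoeff, incProd, decProd, ellJ, invSqrt, Algebra.algebraMap_eq_smul_one, smul_pow]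
  | succ m ih =>
    rw [S.invSqrt_succ_pow hm, ih (by omega), ih (by omega), sum_snoc, Finset.sum_mul,
      Finset.smul_sum]
    simp only [incProd_snoc, decProd_snoc, invSqrtCoeff_snoc_false, Bool.false_eq_true, if_false,
      if_true, mul_one, one_mul, S.invSqrtCoeff_smul_snoc_true hm]

theorem chirality_eq_sum :
    S.chirality = ∑ J, (invSqrtCoeff s c μ n 1 J * s ^ ellJ n J) •
      (incProd S.x n J * S.w * decProd S.y n J) := by
  rw [chirality, ← pow_one (S.invSqrt n), S.invSqrt_pow_eq_sum le_rfl, Finset.mul_sum]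
  refine Finset.sum_congr rfl fun J _ => ?_
  have h : S.w * incProd S.x n J = s ^ ellJ n J • (incProd S.x n J * S.w) :=
    S.qCommute_w_incProd le_rfl J
  rw [mul_smul_comm, ← mul_assoc, h, smul_mul_assoc, smul_smul]

end CliffordSystem

section Coefficients

variable {K : Type*} [Field K]

/-- The scalar `μ_k` for `Cl_{2n+1}(q,c)`, inverse to the factor of `C_k` in the relation for
`γ_{k'} γ_k + γ_k γ_{k'}`. -/
def pairWeight (n : ℕ) (q : K) (k : ℕ) : K :=
  (q ^ (2 * (n : ℤ) - 2 * (k : ℤ)) * (q + q⁻¹))⁻¹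

theorem prod_pairWeight (n : ℕ) {q : K} (hq : q ≠ 0) (J : Fin n → Bool) :
    (∏ k : Fin n, if J k then pairWeight n q k else 1) =
      ((q ^ (2 * n + 2) * (q + q⁻¹))⁻¹) ^ ellJ n J * q ^ (2 * LJ n J) := by
  rw [← Finset.prod_filter, ellJ, LJ, ← Finset.sum_filter, Finset.mul_sum,
    ← Finset.prod_pow_eq_pow_sum, ← Finset.prod_const, ← Finset.prod_mul_distrib]
  refine Finset.prod_congr rfl fun k _ => ?_
  have hexp : (2 * (n : ℤ) - 2 * ((k : ℕ) : ℤ)) =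
      ((2 * n + 2 : ℕ) : ℤ) - ((2 * ((k : ℕ) + 1) : ℕ) : ℤ) := by push_cast; ring
  rw [pairWeight, hexp, zpow_sub₀ hq, zpow_natCast, zpow_natCast]
  simp only [mul_inv, inv_inv, div_eq_mul_inv]
  ring

theorem prod_range_quotient {q c : K} (hq : q ≠ 0) (hqq : q + q⁻¹ ≠ 0) (hc : c ≠ 0) (m : ℕ) :
    (∏ l ∈ Finset.range m,
        ((q ^ (2 * (l : ℤ) + 1) + q ^ (-(2 * (l : ℤ) + 1))) / (q * (q + q⁻¹) * c ^ 2))) *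
      q ^ (m * (m + 1)) =
    c⁻¹ ^ (2 * m) * (∏ t ∈ Finset.range m, ((-q ^ 2)⁻¹ - (-q ^ 2) ^ (2 * t))) *
      (q + q⁻¹)⁻¹ ^ m * (-q ^ 2) ^ m := by
  induction m with
  | zero => simp
  | succ m ih =>
    have hfactor : (q ^ (2 * (m : ℤ) + 1) + q ^ (-(2 * (m : ℤ) + 1))) /
          (q * (q + q⁻¹) * c ^ 2) * q ^ (2 * (m + 1)) =
        c⁻¹ ^ 2 * ((-q ^ 2)⁻¹ - (-q ^ 2) ^ (2 * m)) * (q + q⁻¹)⁻¹ * -q ^ 2 := by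
      have hodd : q ^ (2 * (m : ℤ) + 1) = q ^ (2 * m + 1) := by norm_cast
      rw [zpow_neg, hodd, pow_mul (-q ^ 2) 2]
      generalize q + q⁻¹ = t at *
      field_simp
      ring
    rw [Finset.prod_range_succ, Finset.prod_range_succ,
      show (m + 1) * (m + 1 + 1) = m * (m + 1) + 2 * (m + 1) by ring, pow_add,
      mul_mul_mul_comm, ih, hfactor]
    ring

theorem zOne_coeff_eq (n : ℕ) {q c : K} (hq : q ≠ 0) (hqq : q + q⁻¹ ≠ 0) (hc : c ≠ 0)
    (J : Fin n → Bool) :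
    c⁻¹ * ((∏ l ∈ Finset.range (ellJ n J),
        ((q ^ (2 * (l : ℤ) + 1) + q ^ (-(2 * (l : ℤ) + 1))) / (q * (q + q⁻¹) * c ^ 2))) *
      q ^ (2 * (LJ n J : ℤ) - (ellJ n J : ℤ) * (2 * (n : ℤ) - (ellJ n J : ℤ) + 1))) =
    invSqrtCoeff (-q ^ 2) c (pairWeight n q) n 1 J * (-q ^ 2) ^ ellJ n J := by
  have hexp : 2 * (LJ n J : ℤ) - (ellJ n J : ℤ) * (2 * (n : ℤ) - (ellJ n J : ℤ) + 1) =
      ((ellJ n J * (ellJ n J + 1) : ℕ) : ℤ) + ((2 * LJ n J : ℕ) : ℤ) -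
        (((2 * n + 2) * ellJ n J : ℕ) : ℤ) := by push_cast; ring
  rw [hexp, zpow_sub₀ hq, zpow_add₀ hq]
  simp only [zpow_natCast]
  rw [mul_div_assoc, ← mul_assoc (∏ _ ∈ _, _), prod_range_quotient hq hqq hc, invSqrtCoeff,
    prod_pairWeight n hq, pow_one, pow_mul q (2 * n + 2), mul_inv, mul_pow, inv_pow]
  ring

end Coefficients

theorem ofFn_two_mul_add_one {α : Type*} (n : ℕ) (F : Fin (2 * n + 1) → α) :
    List.ofFn F = (List.ofFn fun k : Fin n => F ⟨k, by omega⟩) ++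
      F ⟨n, by omega⟩ :: (List.ofFn fun k : Fin n => F ⟨2 * n - k, by omega⟩).reverse := by
  refine List.ext_getElem (by simp; omega) fun i h1 h2 => ?_
  rw [List.length_ofFn] at h1
  rw [List.getElem_ofFn]
  rcases lt_trichotomy i n with h | h | h
  · rw [List.getElem_append_left (by simpa using h), List.getElem_ofFn]
  · subst h
    rw [List.getElem_append_right (by simp)]
    simp
  · rw [List.getElem_append_right (by simp; omega), List.getElem_cons, dif_neg (by simp; omega),
      List.getElem_reverse, List.getElem_ofFn]
    congr 1
    ext
    simp
    omega

theorem γ_mul_self (N : ℕ) (q c : ℂ) (i : Fin N) (h : 2 * i.val + 1 ≠ N) :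
    γ N q c i * γ N q c i = 0 := by
  rw [γ, ← map_mul, RingQuot.mkAlgHom_rel ℂ (Rel.sq i h), map_zero]

theorem qCommute_γ (N : ℕ) (q c : ℂ) (i j : Fin N) (hlt : i < j) (h : i.val + j.val + 1 ≠ N) :
    QCommute (-q ^ 2) (γ N q c j) (γ N q c i) := by
  rw [QCommute, γ, γ, ← map_mul, RingQuot.mkAlgHom_rel ℂ (Rel.swap i j hlt h), map_smul, map_mul]

theorem commute_of_forall_commute_γ {N : ℕ} {q c : ℂ} {z : Cl N q c}
    (h : ∀ i, Commute (γ N q c i) z) (a : Cl N q c) : Commute a z := by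
  obtain ⟨b, rfl⟩ := RingQuot.mkAlgHom_surjective ℂ (Rel N q c) a
  induction b using FreeAlgebra.induction with
  | grade0 r => rw [AlgHom.commutes]; exact Algebra.commute_algebraMap_left _ _
  | grade1 i => exact h i
  | mul a b ha hb => rw [map_mul]; exact ha.mul_left hb
  | add a b ha hb => rw [map_add]; exact ha.add_left hb

/-- The generators of `Cl_{2n+1}(q,c)` indexed, from `0`, by natural numbers; the index is clamped
at `2n`. -/
def natGen (n : ℕ) (q c : ℂ) (k : ℕ) : Cl (2 * n + 1) q c :=
  γ (2 * n + 1) q c ⟨min k (2 * n), by omega⟩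

theorem natGen_val {n : ℕ} (q c : ℂ) (i : Fin (2 * n + 1)) :
    natGen n q c i = γ (2 * n + 1) q c i := by
  rw [natGen]
  congr 1
  exact Fin.ext (min_eq_left (by omega))

theorem natGen_mul_self {n k : ℕ} (q c : ℂ) (hk : k ≤ 2 * n) (h : k ≠ n) :
    natGen n q c k * natGen n q c k = 0 :=
  γ_mul_self _ _ _ _ (by simp only; omega)

theorem qCommute_natGen {n j k : ℕ} (q c : ℂ) (hjk : j < k) (hk : k ≤ 2 * n)
    (h : j + k ≠ 2 * n) : QCommute (-q ^ 2) (natGen n q c k) (natGen n q c j) :=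
  qCommute_γ _ _ _ _ _ (by simp only [Fin.lt_def]; omega) (by simp only; omega)

theorem mkAlgHom_pairSum {n : ℕ} (q c : ℂ) (k : Fin (2 * n + 1)) :
    RingQuot.mkAlgHom ℂ (Rel (2 * n + 1) q c) (pairSum (2 * n + 1) q k) =
      ∑ i ∈ Finset.range k, q ^ (2 * (i : ℤ) - 2 * (k : ℤ) + 2) •
        (natGen n q c i * natGen n q c (2 * n - i)) := by
  rw [pairSum, map_sum]
  refine Finset.sum_bij (fun i _ => i.val) (fun i hi => ?_) (fun i _ j _ h => Fin.ext h)
    (fun i hi => ?_) (fun i _ => ?_)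
  · exact Finset.mem_range.2 (Fin.lt_def.1 (Finset.mem_Iio.1 hi))
  · have hik := Finset.mem_range.1 hi
    exact ⟨⟨i, by omega⟩, Finset.mem_Iio.2 (Fin.lt_def.2 hik), rfl⟩
  · have hdual := natGen_val q c (dual i)
    rw [map_smul, map_mul, natGen_val, show 2 * n - i.val = (dual i).val by simp [dual], hdual]
    rfl

/-- The partial Casimir elements `C_k`; up to scalars they are the anticommutators of `γ_k` and
`γ_{k'}`, and `C_n = γ_{n+1}²`. -/
def partialCasimir (n : ℕ) (q c : ℂ) (k : ℕ) : Cl (2 * n + 1) q c :=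
  (q - q⁻¹) • ∑ i ∈ Finset.range k, q ^ (2 * (i : ℤ) - 2 * (n : ℤ) + 2) •
    (natGen n q c i * natGen n q c (2 * n - i)) + algebraMap ℂ _ (c ^ 2)

theorem sq_sub_one_mul_pairWeight (n k : ℕ) {q : ℂ} (hq : q ≠ 0) (hqq : q + q⁻¹ ≠ 0) :
    ((-q ^ 2) ^ 2 - 1) * pairWeight n q k =
      (q - q⁻¹) * q ^ (2 * (k : ℤ) - 2 * (n : ℤ) + 2) := by
  have hfactor : (-q ^ 2) ^ 2 - 1 = (q - q⁻¹) * (q + q⁻¹) * q ^ 2 := by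
    field_simp
    ring
  have hexp : 2 * (k : ℤ) - 2 * (n : ℤ) + 2 = -(2 * (n : ℤ) - 2 * (k : ℤ)) + (2 : ℕ) := by
    push_cast
    ring
  rw [hfactor, pairWeight, hexp, zpow_add₀ hq, zpow_neg, zpow_natCast, mul_inv]
  linear_combination (q - q⁻¹) * q ^ 2 * (q ^ (2 * (n : ℤ) - 2 * (k : ℤ)))⁻¹ * mul_inv_cancel₀ hqq

theorem partialCasimir_succ (n k : ℕ) {q : ℂ} (c : ℂ) (hq : q ≠ 0) (hqq : q + q⁻¹ ≠ 0) :
    partialCasimir n q c (k + 1) = partialCasimir n q c k +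
      ((-q ^ 2) ^ 2 - 1) •
        (pairWeight n q k • (natGen n q c k * natGen n q c (2 * n - k))) := by
  rw [partialCasimir, partialCasimir, Finset.sum_range_succ, smul_add, add_right_comm,
    smul_smul, smul_smul, sq_sub_one_mul_pairWeight n k hq hqq]

theorem natGen_mul_self_middle (n : ℕ) (q c : ℂ) :
    natGen n q c n * natGen n q c n = partialCasimir n q c n := by
  have h := RingQuot.mkAlgHom_rel ℂ
    (Rel.middle (N := 2 * n + 1) (q := q) (c := c) ⟨n, by omega⟩ rfl)
  rw [map_mul, map_add, map_smul, mkAlgHom_pairSum, AlgHom.commutes] at h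
  rw [partialCasimir, ← h, natGen_val q c ⟨n, by omega⟩, γ]

theorem smul_partialCasimir {n k : ℕ} {q : ℂ} (c : ℂ) (hq : q ≠ 0) :
    (q ^ (2 * (n : ℤ) - 2 * (k : ℤ)) * (q + q⁻¹)) • partialCasimir n q c k =
      (q ^ 2 - q⁻¹ ^ 2) • ∑ i ∈ Finset.range k, q ^ (2 * (i : ℤ) - 2 * (k : ℤ) + 2) •
          (natGen n q c i * natGen n q c (2 * n - i)) +
        algebraMap ℂ _ (c ^ 2 * q ^ (2 * (n : ℤ) - 2 * (k : ℤ)) * (q + q⁻¹)) := by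
  rw [partialCasimir, smul_add]
  congr 1
  · simp only [Finset.smul_sum, smul_smul]
    refine Finset.sum_congr rfl fun i _ => ?_
    have hpow : q ^ (2 * (i : ℤ) - 2 * (k : ℤ) + 2) =
        q ^ (2 * (n : ℤ) - 2 * (k : ℤ)) * q ^ (2 * (i : ℤ) - 2 * (n : ℤ) + 2) := by
      rw [← zpow_add₀ hq]
      congr 1
      ring
    rw [hpow]
    congr 1
    ring
  · rw [Algebra.smul_def, ← map_mul]
    congr 1
    ring

theorem natGen_anticomm {n k : ℕ} {q : ℂ} (c : ℂ) (hq : q ≠ 0) (hk : k < n) :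
    natGen n q c (2 * n - k) * natGen n q c k + natGen n q c k * natGen n q c (2 * n - k) =
      (q ^ (2 * (n : ℤ) - 2 * (k : ℤ)) * (q + q⁻¹)) • partialCasimir n q c k := by
  let i : Fin (2 * n + 1) := ⟨k, by omega⟩
  have h := RingQuot.mkAlgHom_rel ℂ (Rel.pair (q := q) (c := c) i (by simp only [i]; omega))
  have hexp : ((2 * n + 1 : ℕ) : ℤ) - 2 * (i.val : ℤ) - 1 = 2 * (n : ℤ) - 2 * (k : ℤ) := by
    simp only [i]
    push_cast
    ring
  rw [hexp, map_mul, map_add, map_add, map_neg, map_mul, map_smul, mkAlgHom_pairSum,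
    AlgHom.commutes, add_assoc, ← smul_partialCasimir c hq] at h
  have hx : natGen n q c k = γ (2 * n + 1) q c i := natGen_val q c i
  have hy : natGen n q c (2 * n - k) = γ (2 * n + 1) q c (dual i) := natGen_val q c (dual i)
  rw [hx, hy, γ, γ, h, neg_add_cancel_comm]

/-- The generators of `Cl_{2n+1}(q,c)` form a Clifford system. -/
def cliffordSystem (n : ℕ) {q c : ℂ} (hq : q ≠ 0) (hqq : q + q⁻¹ ≠ 0) (hc : c ≠ 0) :
    CliffordSystem (-q ^ 2) c (pairWeight n q) n (Cl (2 * n + 1) q c) where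
  x := natGen n q c
  y k := natGen n q c (2 * n - k)
  w := natGen n q c n
  casimir := partialCasimir n q c
  s_ne_zero := neg_ne_zero.2 (pow_ne_zero 2 hq)
  c_ne_zero := hc
  x_sq _ _ := natGen_mul_self q c (by omega) (by omega)
  y_sq _ _ := natGen_mul_self q c (by omega) (by omega)
  x_x _ _ := qCommute_natGen q c (by omega) (by omega) (by omega)
  y_y _ _ := qCommute_natGen q c (by omega) (by omega) (by omega)
  y_x _ _ _ := qCommute_natGen q c (by omega) (by omega) (by omega)
  w_x _ := qCommute_natGen q c (by omega) (by omega) (by omega)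
  y_w _ := qCommute_natGen q c (by omega) (by omega) (by omega)
  casimir_zero := by rw [partialCasimir, Finset.sum_range_zero, smul_zero, zero_add]
  casimir_succ k _ := partialCasimir_succ n k c hq hqq
  anticomm k hk := by
    rw [natGen_anticomm c hq hk, pairWeight,
      inv_smul_smul₀ (mul_ne_zero (zpow_ne_zero _ hq) hqq)]
  w_sq := natGen_mul_self_middle n q c

theorem monoMid_eq (n : ℕ) (hn : 1 ≤ n) (q c : ℂ) (J : Fin n → Bool) :
    monoMid n hn q c J = incProd (natGen n q c) n J * natGen n q c n *
      decProd (fun k => natGen n q c (2 * n - k)) n J := by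
  have hlow (k : Fin n) : lowOdd n hn ⟨k, by omega⟩ = k :=
    Fin.ext (by simp only [lowOdd]; omega)
  have hhigh (k : Fin n) : lowOdd n hn ⟨2 * n - k, by omega⟩ = k :=
    Fin.ext (by simp only [lowOdd]; omega)
  have hne (k : Fin n) : (k : ℕ) ≠ n ∧ 2 * n - (k : ℕ) ≠ n := by omega
  simp only [monoMid, ← natGen_val, ← List.ofFn_eq_map, ofFn_two_mul_add_one, List.prod_append,
    List.prod_cons, hlow, hhigh, (hne _).1, (hne _).2, if_true, if_false, incProd, decProd,
    mul_assoc]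

theorem prodFrom_eq_decProd (n : ℕ) (q c : ℂ) :
    prodFrom (2 * n + 1) q c (n + 1) =
      decProd (fun k => natGen n q c (2 * n - k)) n fun _ => true := by
  rw [prodFrom, List.map_drop, ← List.ofFn_eq_map, ofFn_two_mul_add_one, List.drop_append,
    List.drop_of_length_le (by simp)]
  simp [decProd, ← natGen_val]

theorem zOne_eq_chirality (n : ℕ) (hn : 1 ≤ n) {q c : ℂ} (hq : q ≠ 0) (hqq : q + q⁻¹ ≠ 0)
    (hc : c ≠ 0) : zOne n hn q c = (cliffordSystem n hq hqq hc).chirality := by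
  rw [CliffordSystem.chirality_eq_sum, zOne, Finset.smul_sum]
  refine Finset.sum_congr rfl fun J _ => ?_
  rw [smul_smul, zOne_coeff_eq n hq hqq hc, monoMid_eq]
  rfl

/-- The generator `φ^η` of the left ideal `I_L^η`. -/
def phi (n : ℕ) (q c η : ℂ) : Cl (2 * n + 1) q c :=
  (algebraMap ℂ (Cl (2 * n + 1) q c) (η * c) + γ (2 * n + 1) q c ⟨n, by omega⟩) *
    prodFrom (2 * n + 1) q c (n + 1)

theorem chirality_mul_phi (n : ℕ) {q c : ℂ} (hq : q ≠ 0) (hqq : q + q⁻¹ ≠ 0) (hc : c ≠ 0) {η : ℂ}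
    (hη : η * η = 1) :
    (cliffordSystem n hq hqq hc).chirality * phi n q c η = η • phi n q c η := by
  rw [phi, prodFrom_eq_decProd, ← natGen_val]
  exact (cliffordSystem n hq hqq hc).chirality_mul_of_idem_mul_eq_zero (fun k hk =>
    (cliffordSystem n hq hqq hc).idem_mul_decProd hk le_rfl (J := fun _ => true) rfl) hη

theorem commute_γ_chirality (n : ℕ) {q c : ℂ} (hq : q ≠ 0) (hqq : q + q⁻¹ ≠ 0) (hc : c ≠ 0)
    (i : Fin (2 * n + 1)) :
    Commute (γ (2 * n + 1) q c i) (cliffordSystem n hq hqq hc).chirality := by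
  rw [← natGen_val]
  rcases lt_trichotomy i.val n with h | h | h
  · exact (cliffordSystem n hq hqq hc).commute_x_chirality h
  · rw [h]
    exact (cliffordSystem n hq hqq hc).commute_w_chirality
  · have hy := (cliffordSystem n hq hqq hc).commute_y_chirality (k := 2 * n - i) (by omega)
    rw [show i.val = 2 * n - (2 * n - i) by omega]
    exact hy

theorem zOne_central_involution_general (n : ℕ) (hn : 1 ≤ n) (q c : ℂ)
    (hq : q ≠ 0) (hq2 : q ^ 2 ≠ -1) (hc : c ≠ 0) :
    (∀ i : Fin (2 * n + 1),
      zOne n hn q c * γ (2 * n + 1) q c i = γ (2 * n + 1) q c i * zOne n hn q c) ∧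
    zOne n hn q c * zOne n hn q c = 1 ∧
    (∀ η : ℂ, η = 1 ∨ η = -1 →
      ∀ x ∈ Ideal.span {phi n q c η}, zOne n hn q c * x = η • x) := by
  have hqq : q + q⁻¹ ≠ 0 := fun h => hq2 <| by
    have hmul : q * (q + q⁻¹) = 0 := by rw [h, mul_zero]
    rw [mul_add, mul_inv_cancel₀ hq] at hmul
    linear_combination hmul
  have hcentral := commute_γ_chirality n hq hqq hc
  rw [zOne_eq_chirality n hn hq hqq hc]
  refine ⟨fun i => (hcentral i).eq.symm, CliffordSystem.chirality_mul_self _, fun η hη x hx => ?_⟩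
  obtain ⟨a, rfl⟩ := Ideal.mem_span_singleton'.1 hx
  rw [← mul_assoc, ← (commute_of_forall_commute_γ hcentral a).eq, mul_assoc,
    chirality_mul_phi n hq hqq hc (mul_self_eq_one_iff.2 hη), mul_smul_comm]

/-- `z_1` is central, `z_1² = 1`, and `z_1` acts by the scalar `η` on
the left ideal `Cl_{2n+1}(q,c)·φ^η`, `η = ±1`. -/
theorem zOne_central_involution (n : ℕ) (hn : 1 ≤ n) (q c : ℂ)
    (hq : q ≠ 0) (hqr : ∀ m : ℕ, 0 < m → q ^ m ≠ 1) (hc : c ≠ 0) :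
    (∀ i : Fin (2 * n + 1),
      zOne n hn q c * γ (2 * n + 1) q c i = γ (2 * n + 1) q c i * zOne n hn q c) ∧
    zOne n hn q c * zOne n hn q c = 1 ∧
    (∀ η : ℂ, η = 1 ∨ η = -1 →
      ∀ x ∈ Ideal.span {(algebraMap ℂ (Cl (2 * n + 1) q c) (η * c) +
          γ (2 * n + 1) q c ⟨n, by omega⟩) * prodFrom (2 * n + 1) q c (n + 1)},
        zOne n hn q c * x = η • x) :=
  zOne_central_involution_general n hn q c hq
    (fun h => hqr 4 (by norm_num) (by linear_combination (q ^ 2 - 1) * h)) hc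

end FRT
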